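/- arXiv:2603.28485 — 3 statements merged into one kernel-verified Lean document; each statement's English description precedes it below -/
import Mathlib

section
/- Let m ≥ 2, let π be a permutation of F_{2^m}, and define h : F_{2^m} × F_{2^m} → F_2 by h(x₁,x₂) = Tr_1^m(x₁ π(x₂)). Then every M-subspace of h of dimension at least 2 is contained in F_{2^m} × {0} (equivalently, F_{2^m} × {0} is the unique m-dimensional M-subspace of h containing all nontrivial M-subspaces of h) if and only if π satisfies Property (P). -/
/-- The second-order derivative `D_a D_b f (x) = f x + f (x+a) + f (x+b) + f (x+a+b)`. -/
def D2 {V : Type*} [AddCommGroup V] (f : V → ZMod 2) (a b x : V) : ZMod 2 :=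
  f x + f (x + a) + f (x + b) + f (x + a + b)

/-- An `M`-subspace of `f` : a subspace on which all second-order derivatives of `f` vanish. -/
def IsMSubspace {V : Type*} [AddCommGroup V] [Module (ZMod 2) V] (f : V → ZMod 2)
    (U : Submodule (ZMod 2) V) : Prop :=
  ∀ a ∈ U, ∀ b ∈ U, ∀ x, D2 f a b x = 0

/-- The absolute trace map of `F_{2^m}`. -/
noncomputable def Tr (m : ℕ) (x : GaloisField 2 m) : ZMod 2 :=
  Algebra.trace (ZMod 2) (GaloisField 2 m) x

/-- Property (P) for a permutation `π` of `F_{2^m}`. -/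
def PropertyP (m : ℕ) (π : GaloisField 2 m → GaloisField 2 m) : Prop :=
  ∀ a₁ a₂ b₁ b₂ : GaloisField 2 m,
    ((∀ x, π x + π (x + a₂) + π (x + b₂) + π (x + a₂ + b₂) = 0) ∧
     (∀ x, Tr m (a₁ * π (x + a₂) + b₁ * π (x + b₂) + (a₁ + b₁) * π (x + a₂ + b₂)) = 0)) ↔
    ((a₁ = 0 ∧ a₂ = 0) ∨ (b₁ = 0 ∧ b₂ = 0) ∨ (a₁ = b₁ ∧ a₂ = b₂) ∨ (a₂ = 0 ∧ b₂ = 0))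
lemma aux_D2_iff (m : ℕ) (hm : 2 ≤ m)
    (π : GaloisField 2 m → GaloisField 2 m)
    (h : GaloisField 2 m × GaloisField 2 m → ZMod 2)
    (hh : ∀ x₁ x₂, h (x₁, x₂) = Tr m (x₁ * π x₂)) (a b : GaloisField 2 m × GaloisField 2 m) :
    (∀ x, D2 h a b x = 0) ↔
    ((∀ x, π x + π (x + a.2) + π (x + b.2) + π (x + a.2 + b.2) = 0) ∧
     (∀ x, Tr m (a.1 * π (x + a.2) + b.1 * π (x + b.2) + (a.1 + b.1) * π (x + a.2 + b.2)) = 0)) := by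
  obtain ⟨a₁, a₂⟩ := a
  obtain ⟨b₁, b₂⟩ := b
  have key : ∀ x₁ x₂, D2 h (a₁, a₂) (b₁, b₂) (x₁, x₂) =
      Tr m (x₁ * (π x₂ + π (x₂ + a₂) + π (x₂ + b₂) + π (x₂ + a₂ + b₂))) +
      Tr m (a₁ * π (x₂ + a₂) + b₁ * π (x₂ + b₂) + (a₁ + b₁) * π (x₂ + a₂ + b₂)) := by
    intro x₁ x₂
    simp only [D2, Prod.mk_add_mk, hh, Tr, ← map_add]
    congr 1
    ring
  have hT0 : Tr m 0 = 0 := by simp [Tr]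
  constructor
  · intro H
    have H2 : ∀ x, Tr m (a₁ * π (x + a₂) + b₁ * π (x + b₂) + (a₁ + b₁) * π (x + a₂ + b₂)) = 0 := by
      intro x
      have := key 0 x
      rw [H, zero_mul, hT0, zero_add] at this
      exact this.symm
    refine ⟨fun x => ?_, H2⟩
    have hnd := traceForm_nondegenerate (ZMod 2) (GaloisField 2 m)
    apply hnd.2
    intro y
    have := key y x
    rw [H, H2, add_zero] at this
    simpa [Algebra.traceForm_apply, Tr] using this.symm
  · rintro ⟨H1, H2⟩ ⟨x₁, x₂⟩
    rw [key]
    simp only at H1 H2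
    rw [H1, H2, mul_zero, hT0, add_zero]

lemma aux_zmod2 (s : ZMod 2) : s = 0 ∨ s = 1 := by
  revert s; decide

lemma aux_span {V : Type*} [AddCommGroup V] [Module (ZMod 2) V] (f : V → ZMod 2) (a b : V)
    (H : ∀ x, D2 f a b x = 0) : IsMSubspace f (Submodule.span (ZMod 2) {a, b}) := by
  have hV : ∀ v : V, v + v = 0 := fun v => by
    have : (2 : ZMod 2) • v = v + v := two_smul _ v
    rw [← this, show (2 : ZMod 2) = 0 from rfl, zero_smul]
  have hZ : ∀ v : ZMod 2, v + v = 0 := by decide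
  have hV2 : ∀ v w : V, v + w + w = v := fun v w => by rw [add_assoc, hV, add_zero]
  have symm : ∀ a b : V, (∀ x, D2 f a b x = 0) → ∀ x, D2 f b a x = 0 := by
    intro a b H x
    rw [← H x]; simp only [D2]; rw [add_right_comm x b a]; ring
  have z : ∀ b x, D2 f 0 b x = 0 := by
    intro b x
    simp only [D2, add_zero]
    linear_combination hZ (f x) + hZ (f (x + b))
  have d : ∀ b x, D2 f b b x = 0 := by
    intro b x
    simp only [D2, hV2]
    linear_combination hZ (f x) + hZ (f (x + b))
  have s : ∀ a b : V, (∀ x, D2 f a b x = 0) → ∀ x, D2 f a (a + b) x = 0 := by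
    intro a b H x
    rw [← H x]; simp only [D2, ← add_assoc, hV2]; ring
  have hba := symm a b H
  have h1 := s a b H
  have h2 := s b a hba
  rw [add_comm b a] at h2
  have h3 := symm _ _ h1
  have h4 := symm _ _ h2
  have mem : ∀ u ∈ Submodule.span (ZMod 2) {a, b}, u = 0 ∨ u = a ∨ u = b ∨ u = a + b := by
    intro u hu
    obtain ⟨s, t, rfl⟩ := Submodule.mem_span_pair.1 hu
    rcases aux_zmod2 s with rfl | rfl <;> rcases aux_zmod2 t with rfl | rfl <;> simp
  intro u hu v hv
  rcases mem u hu with rfl | rfl | rfl | rfl <;> rcases mem v hv with rfl | rfl | rfl | rfl <;>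
    first
    | assumption
    | exact z _
    | exact d _
    | exact symm _ _ (z _)

/-- Corollary 3.5: for the Maiorana–McFarland function `h(x₁,x₂) = Tr(x₁ π(x₂))`, every
`M`-subspace of dimension at least `2` is contained in `F_{2^m} × {0}` if and only if the
permutation `π` satisfies Property (P). -/
theorem MM_unique_M_subspace_iff_propertyP
    (m : ℕ) (hm : 2 ≤ m)
    (π : GaloisField 2 m → GaloisField 2 m) (hπ : Function.Bijective π)
    (h : GaloisField 2 m × GaloisField 2 m → ZMod 2)
    (hh : ∀ x₁ x₂, h (x₁, x₂) = Tr m (x₁ * π x₂)) :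
    (∀ U : Submodule (ZMod 2) (GaloisField 2 m × GaloisField 2 m),
        IsMSubspace h U → 2 ≤ Module.finrank (ZMod 2) U →
        U ≤ (⊤ : Submodule (ZMod 2) (GaloisField 2 m)).prod
              (⊥ : Submodule (ZMod 2) (GaloisField 2 m))) ↔
    PropertyP m π := by
  have hadd : ∀ v : GaloisField 2 m, v + v = 0 := fun v => CharTwo.add_self_eq_zero v
  constructor
  · intro H a₁ a₂ b₁ b₂
    constructor
    · intro hP
      by_contra hne
      push Not at hne
      obtain ⟨n1, n2, n3, n4⟩ := hne
      have hD := (aux_D2_iff m hm π h hh (a₁, a₂) (b₁, b₂)).2 hP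
      have hU := aux_span h _ _ hD
      have hli : LinearIndependent (ZMod 2)
          ![((a₁, a₂) : GaloisField 2 m × GaloisField 2 m), (b₁, b₂)] := by
        rw [LinearIndependent.pair_iff]
        intro s t hst
        rcases aux_zmod2 s with rfl | rfl <;> rcases aux_zmod2 t with rfl | rfl
        · exact ⟨rfl, rfl⟩
        · simp at hst
          exact absurd hst.2 (n2 hst.1)
        · simp at hst
          exact absurd hst.2 (n1 hst.1)
        · simp at hst
          exact absurd (CharTwo.add_eq_zero.1 hst.2) (n3 (CharTwo.add_eq_zero.1 hst.1))
      have hr := finrank_span_eq_card hli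
      have hrg : Set.range ![((a₁, a₂) : GaloisField 2 m × GaloisField 2 m), (b₁, b₂)] =
          {(a₁, a₂), (b₁, b₂)} := by
        ext v; simp [or_comm]
      rw [hrg, Fintype.card_fin] at hr
      have hle := H _ hU hr.ge
      have ha := hle (Submodule.subset_span (Set.mem_insert _ _))
      have hb := hle (Submodule.subset_span (Set.mem_insert_of_mem _ rfl))
      simp [Submodule.mem_prod] at ha hb
      exact n4 ha hb
    · rintro (⟨rfl, rfl⟩ | ⟨rfl, rfl⟩ | ⟨rfl, rfl⟩ | ⟨rfl, rfl⟩)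
      all_goals
        refine ⟨fun x => ?_, fun x => ?_⟩
        · simp [add_assoc, hadd]
          try linear_combination hadd (π x) + hadd (π (x + _))
        · simp [add_mul, add_assoc, hadd, Tr]
          try (simp only [← map_add]; rw [← map_zero (Algebra.trace (ZMod 2) (GaloisField 2 m))]; congr 1; linear_combination hadd (a₁ * π x) + hadd (b₁ * π x))
  · intro hP U hU hr a ha
    by_contra hna
    have ha2 : a.2 ≠ 0 := by
      intro h0; apply hna; simp [Submodule.mem_prod, h0]
    have : ∃ b ∈ U, b ≠ 0 ∧ b ≠ a := by
      by_contra hc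
      push Not at hc
      have hle : U ≤ Submodule.span (ZMod 2) {a} := by
        intro b hb
        by_cases h0 : b = 0
        · rw [h0]; exact Submodule.zero_mem _
        · rw [hc b hb h0]; exact Submodule.mem_span_singleton_self a
      have h1 := Submodule.finrank_mono hle
      have h2 := finrank_span_singleton (K := ZMod 2) (v := a) (fun h0 => ha2 (by rw [h0]; rfl))
      omega
    obtain ⟨b, hb, hb0, hba⟩ := this
    have := (hP a.1 a.2 b.1 b.2).1 ((aux_D2_iff m hm π h hh a b).1 (hU a ha b hb))
    rcases this with h1 | h1 | h1 | h1
    · exact ha2 h1.2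
    · exact hb0 (Prod.ext h1.1 h1.2)
    · exact hba (Prod.ext h1.1.symm h1.2.symm)
    · exact ha2 h1.1
end

section
/- Let m, k be positive integers with m > k + 2, and let π be a permutation of F_{2^m} satisfying Property (P). For z ∈ F_{2^k} define f^{(z)} : F_{2^m} × F_{2^m} → F_2 by f^{(z)}(x₁,x₂) = Tr_1^m(x₁ π(x₂)) if Tr_1^k(z) = 0 and f^{(z)}(x₁,x₂) = Tr_1^m(x₂ π(x₁)) if Tr_1^k(z) = 1, and define f : F_{2^m} × F_{2^m} × F_{2^k} × F_{2^k} → F_2 by f(x₁,x₂,y,z) = f^{(z)}(x₁,x₂) + Tr_1^k(yz). Then every M-subspace of f has F_2-dimension strictly less than m + k. -/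
lemma Tr_add' (m : ℕ) (x y : GaloisField 2 m) : Tr m (x + y) = Tr m x + Tr m y := by
  simp [Tr]

lemma Tr_nondeg' (m : ℕ) (s : GaloisField 2 m) (h : ∀ x, Tr m (x * s) = 0) : s = 0 := by
  have := traceForm_nondegenerate (ZMod 2) (GaloisField 2 m)
  apply this.1 s
  intro y
  rw [Algebra.traceForm_apply, mul_comm]
  exact h y

lemma key_dep (m : ℕ) (π : GaloisField 2 m → GaloisField 2 m) (hP : PropertyP m π)
    (a₁ a₂ b₁ b₂ : GaloisField 2 m)
    (h : ∀ x₁ x₂, Tr m (x₁ * π x₂) + Tr m ((x₁ + a₁) * π (x₂ + a₂))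
      + Tr m ((x₁ + b₁) * π (x₂ + b₂)) + Tr m ((x₁ + a₁ + b₁) * π (x₂ + a₂ + b₂)) = 0) :
    ((a₁ = 0 ∧ a₂ = 0) ∨ (b₁ = 0 ∧ b₂ = 0) ∨ (a₁ = b₁ ∧ a₂ = b₂) ∨ (a₂ = 0 ∧ b₂ = 0)) := by
  have h2 : ∀ x, Tr m (a₁ * π (x + a₂) + b₁ * π (x + b₂) + (a₁ + b₁) * π (x + a₂ + b₂)) = 0 := by
    intro x
    have := h 0 x
    simp only [← Tr_add'] at this
    rw [← this]
    congr 1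
    ring
  refine (hP a₁ a₂ b₁ b₂).1 ⟨fun x => ?_, h2⟩
  apply Tr_nondeg'
  intro y
  have e1 := h y x
  have e2 := h2 x
  simp only [← Tr_add'] at e1
  have : Tr m (y * (π x + π (x + a₂) + π (x + b₂) + π (x + a₂ + b₂)))
    + Tr m (a₁ * π (x + a₂) + b₁ * π (x + b₂) + (a₁ + b₁) * π (x + a₂ + b₂)) = 0 := by
    rw [← Tr_add', ← e1]
    congr 1
    ring
  rwa [e2, add_zero] at this

theorem GMM_from_propertyP_outside_MM
    (m k : ℕ) (hk : 0 < k) (hmk : m > k + 2)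
    (π : GaloisField 2 m → GaloisField 2 m) (hπ : Function.Bijective π)
    (hP : PropertyP m π)
    (f : GaloisField 2 m × GaloisField 2 m × GaloisField 2 k × GaloisField 2 k → ZMod 2)
    (hf : ∀ (x₁ x₂ : GaloisField 2 m) (y z : GaloisField 2 k),
      f (x₁, x₂, y, z) =
        (if Tr k z = 0 then Tr m (x₁ * π x₂) else Tr m (x₂ * π x₁)) + Tr k (y * z)) :
    ∀ U : Submodule (ZMod 2)
        (GaloisField 2 m × GaloisField 2 m × GaloisField 2 k × GaloisField 2 k),
      IsMSubspace f U → Module.finrank (ZMod 2) U < m + k := by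
  intro U hU
  obtain ⟨z₁, hz₁⟩ : ∃ z, Tr k z ≠ 0 := by
    by_contra! hc
    exact one_ne_zero (Tr_nondeg' k 1 (fun x => hc _))
  have hz0 : Tr k 0 = 0 := by simp [Tr]
  have dep : ∀ a₁ a₂ a₃ b₁ b₂ b₃, (a₁, a₂, a₃, (0 : GaloisField 2 k)) ∈ U →
      (b₁, b₂, b₃, (0 : GaloisField 2 k)) ∈ U →
      (a₁ = 0 ∧ a₂ = 0) ∨ (b₁ = 0 ∧ b₂ = 0) ∨ (a₁ = b₁ ∧ a₂ = b₂) := by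
    intro a₁ a₂ a₃ b₁ b₂ b₃ ha hb
    have A := key_dep m π hP a₁ a₂ b₁ b₂ (by
      intro x₁ x₂
      have := hU _ ha _ hb (x₁, x₂, 0, 0)
      simpa [D2, hf, hz0] using this)
    have B := key_dep m π hP a₂ a₁ b₂ b₁ (by
      intro x₁ x₂
      have := hU _ ha _ hb (x₂, x₁, 0, z₁)
      simp only [D2, hf, Prod.mk_add_mk, add_zero, if_neg hz₁] at this
      rw [← this]
      have e : Tr k (0 * z₁) + Tr k ((0 + a₃) * z₁) + Tr k ((0 + b₃) * z₁)
          + Tr k ((0 + a₃ + b₃) * z₁) = 0 := by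
        simp only [← Tr_add']
        rw [← hz0]
        congr 1
        linear_combination (a₃ * z₁ + b₃ * z₁) * CharTwo.two_eq_zero (R := GaloisField 2 k)
      linear_combination -e)
    rcases A with A | A | A | A
    · exact Or.inl A
    · exact Or.inr (Or.inl A)
    · exact Or.inr (Or.inr A)
    · rcases B with B | B | B | B
      · exact Or.inl B.symm
      · exact Or.inr (Or.inl B.symm)
      · exact Or.inr (Or.inr B.symm)
      · exact Or.inl ⟨B.1, A.1⟩
  let F := GaloisField 2 m
  let K := GaloisField 2 k
  have hFK : Module.finrank (ZMod 2) K = k := GaloisField.finrank 2 hk.ne'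
  -- projection to `z`
  let L : U →ₗ[ZMod 2] K :=
    (LinearMap.snd (ZMod 2) K K ∘ₗ LinearMap.snd (ZMod 2) F (K × K) ∘ₗ
      LinearMap.snd (ZMod 2) F (F × K × K)) ∘ₗ U.subtype
  have hL : ∀ u : U, L u = u.1.2.2.2 := fun _ => rfl
  let P : LinearMap.ker L →ₗ[ZMod 2] F × F :=
    ((LinearMap.fst (ZMod 2) F (F × K × K)).prod
      (LinearMap.fst (ZMod 2) F (K × K) ∘ₗ LinearMap.snd (ZMod 2) F (F × K × K))) ∘ₗ
      U.subtype ∘ₗ (LinearMap.ker L).subtype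
  have hPd : ∀ u, P u = (u.1.1.1, u.1.1.2.1) := fun _ => rfl
  let Y : LinearMap.ker P →ₗ[ZMod 2] K :=
    (LinearMap.fst (ZMod 2) K K ∘ₗ LinearMap.snd (ZMod 2) F (K × K) ∘ₗ
      LinearMap.snd (ZMod 2) F (F × K × K)) ∘ₗ U.subtype ∘ₗ (LinearMap.ker L).subtype ∘ₗ
      (LinearMap.ker P).subtype
  have hYd : ∀ u, Y u = u.1.1.1.2.2.1 := fun _ => rfl
  have r1 := LinearMap.finrank_range_add_finrank_ker L
  have r2 := LinearMap.finrank_range_add_finrank_ker P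
  have s1 : Module.finrank (ZMod 2) (LinearMap.range L) ≤ k :=
    (Submodule.finrank_le _).trans hFK.le
  have s3 : Module.finrank (ZMod 2) (LinearMap.ker P) ≤ k := by
    refine (LinearMap.finrank_le_finrank_of_injective (f := Y) ?_).trans hFK.le
    rw [← LinearMap.ker_eq_bot, LinearMap.ker_eq_bot']
    rintro ⟨⟨⟨⟨a, b, c, d⟩, h1⟩, h2⟩, h3⟩ h4
    have h2' : d = 0 := h2
    have h3' : (a, b) = 0 := h3
    have h4' : c = 0 := h4
    simp only [Prod.mk_eq_zero] at h3'
    obtain ⟨rfl, rfl⟩ := h3'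
    subst h2' h4'
    rfl
  have s2 : Module.finrank (ZMod 2) (LinearMap.range P) ≤ 1 := by
    have dp : ∀ u v, P u = 0 ∨ P v = 0 ∨ P u = P v := by
      rintro ⟨⟨⟨a, b, c, d⟩, h1⟩, h2⟩ ⟨⟨⟨a', b', c', d'⟩, h1'⟩, h2'⟩
      have e : d = 0 := h2
      have e' : d' = 0 := h2'
      subst e e'
      have := dep _ _ _ _ _ _ h1 h1'
      simpa [hPd, Prod.ext_iff] using this
    by_cases hall : ∀ u, P u = 0
    · have : P = 0 := LinearMap.ext hall
      rw [this, LinearMap.range_zero]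
      simp
    · push Not at hall
      obtain ⟨v, hv⟩ := hall
      refine finrank_le_one (⟨P v, v, rfl⟩ : LinearMap.range P) ?_
      rintro ⟨_, u, rfl⟩
      rcases dp u v with h | h | h
      · exact ⟨0, by ext1; simp [h]⟩
      · exact absurd h hv
      · exact ⟨1, by ext1; simp [h]⟩
  omega
end

section
/- Let m ≥ 4 and let π be the permutation of F_{2^m} defined by π(x) = x^{2^m − 2} (i.e., π(x) = x⁻¹ for x ≠ 0 and π(0) = 0). Then π satisfies Property (P). -/
theorem key_aux {F : Type*} [Field F] [Finite F] [Algebra (ZMod 2) F] [CharP F 2]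
    (hF : 8 ≤ Nat.card F)
    (f : F →ₗ[ZMod 2] ZMod 2) (hf : f ≠ 0) (h : ∀ y : F, f ((y ^ 2 + y)⁻¹) = 0) : False := by
  have two : (2 : F) = 0 := CharTwo.two_eq_zero
  have hfr : Module.Finite (ZMod 2) F := Module.Finite.of_finite
  let L : F →ₗ[ZMod 2] F :=
    { toFun := fun y => y ^ 2 + y
      map_add' := by intro x y; linear_combination (x * y) * two
      map_smul' := by
        intro c x
        have hc : c ^ 2 = c := by revert c; decide
        simp only [smul_pow, hc, smul_add, RingHom.id_apply] }
  have hL : ∀ y, L y = y ^ 2 + y := fun _ => rfl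
  have hker : Module.finrank (ZMod 2) (LinearMap.ker L) ≤ 1 := by
    refine finrank_le_one (⟨1, ?_⟩ : LinearMap.ker L) ?_
    · rw [LinearMap.mem_ker, hL]; linear_combination two
    · rintro ⟨w, hw⟩
      rw [LinearMap.mem_ker, hL] at hw
      have : w * (w + 1) = 0 := by linear_combination hw
      rcases mul_eq_zero.mp this with h0 | h1
      · exact ⟨0, by ext; simp [h0]⟩
      · refine ⟨1, ?_⟩
        ext
        simp only [one_smul]
        linear_combination -h1 + two
  have hr := LinearMap.finrank_range_add_finrank_ker L
  have hk := Module.Dual.finrank_ker_add_one_of_ne_zero (f := f) hf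
  have hle : Module.finrank (ZMod 2) (LinearMap.ker f) ≤ Module.finrank (ZMod 2) (LinearMap.range L) := by
    omega
  have hcF : Nat.card F = 2 ^ Module.finrank (ZMod 2) F := by
    rw [Module.natCard_eq_pow_finrank (K := ZMod 2)]; simp
  have hcK : Nat.card (LinearMap.ker f) = 2 ^ Module.finrank (ZMod 2) (LinearMap.ker f) := by
    rw [Module.natCard_eq_pow_finrank (K := ZMod 2)]; simp
  have hcR : Nat.card (LinearMap.range L) = 2 ^ Module.finrank (ZMod 2) (LinearMap.range L) := by
    rw [Module.natCard_eq_pow_finrank (K := ZMod 2)]; simp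
  have hcard : Nat.card (LinearMap.ker f) ≤ Nat.card (LinearMap.range L) := by
    rw [hcK, hcR]; exact Nat.pow_le_pow_right (by norm_num) hle
  have hsub : (fun x : F => x⁻¹) '' (LinearMap.range L : Set F) ⊆ (LinearMap.ker f : Set F) := by
    rintro _ ⟨_, ⟨y, rfl⟩, rfl⟩
    exact h y
  have heq : (fun x : F => x⁻¹) '' (LinearMap.range L : Set F) = (LinearMap.ker f : Set F) := by
    refine Set.eq_of_subset_of_ncard_le hsub ?_ (Set.toFinite _)
    rw [Set.ncard_image_of_injective _ inv_injective]
    exact hcard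
  have hinv : ∀ s, s ∈ LinearMap.ker f ↔ s⁻¹ ∈ LinearMap.range L := by
    intro s
    have : s ∈ (LinearMap.ker f : Set F) ↔ s⁻¹ ∈ (LinearMap.range L : Set F) := by
      rw [← heq]
      constructor
      · rintro ⟨t, ht, rfl⟩; simpa using ht
      · intro hs; exact ⟨_, hs, inv_inv s⟩
    exact this
  have hinv' : ∀ s, s ∈ LinearMap.range L → s⁻¹ ∈ LinearMap.ker f := by
    intro s hs; rw [hinv, inv_inv]; exact hs
  -- closure under u^2/v
  have h1 : ∀ u v : F, u ∈ LinearMap.range L → v ∈ LinearMap.range L →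
      u ^ 2 * v⁻¹ ∈ LinearMap.range L := by
    intro u v hu hv
    by_cases hu0 : u = 0
    · simp [hu0]
    by_cases hv0 : v = 0
    · simp [hv0]
    by_cases huv : u + v = 0
    · have : v = u := by linear_combination huv - u * two
      rw [this]
      have : u ^ 2 * u⁻¹ = u := by field_simp
      rwa [this]
    have hw := hinv' _ (Submodule.add_mem _ hu hv)
    have hz := (hinv _).1 (Submodule.add_mem _ (hinv' _ hu) hw)
    have : u ^ 2 * v⁻¹ = (u⁻¹ + (u + v)⁻¹)⁻¹ + u := by
      have e : u⁻¹ + (u + v)⁻¹ = v / (u * (u + v)) := by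
        field_simp
        linear_combination u * two
      rw [e]
      field_simp
      linear_combination (-v) * two
    rw [this]
    exact Submodule.add_mem _ hz hu
  -- square roots
  have h2 : ∀ w, w ∈ LinearMap.range L → ∃ u ∈ LinearMap.range L, u ^ 2 = w := by
    rintro _ ⟨y, rfl⟩
    have hs : Function.Surjective (fun x : F => x ^ 2) := by
      apply Finite.surjective_of_injective
      intro a b hab
      have : (a - b) ^ 2 = 0 := by
        simp only at hab
        linear_combination hab + (b ^ 2 - a * b) * two
      exact sub_eq_zero.mp (pow_eq_zero_iff (two_ne_zero) |>.mp this)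
    obtain ⟨z, rfl⟩ := hs y
    refine ⟨L z, ⟨z, rfl⟩, ?_⟩
    simp only [hL]
    linear_combination (z ^ 3) * two
  have h3 : ∀ w v : F, w ∈ LinearMap.range L → v ∈ LinearMap.range L →
      w * v⁻¹ ∈ LinearMap.range L := by
    intro w v hw hv
    obtain ⟨u, hu, rfl⟩ := h2 w hw
    exact h1 u v hu hv
  have hn : 3 ≤ Module.finrank (ZMod 2) F := by
    by_contra hlt
    have : 2 ^ Module.finrank (ZMod 2) F ≤ 2 ^ 2 := Nat.pow_le_pow_right (by norm_num) (by omega)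
    omega
  obtain ⟨g, hg, hg01⟩ : ∃ g ∈ (LinearMap.range L : Set F), g ∉ ({0, 1} : Set F) := by
    apply Set.exists_mem_notMem_of_ncard_lt_ncard
    · have a1 : ({0, 1} : Set F).ncard ≤ 2 := Set.ncard_insert_le _ _ |>.trans (by simp)
      have a2 : (LinearMap.range L : Set F).ncard = 2 ^ Module.finrank (ZMod 2) (LinearMap.range L) := hcR
      have a3 : 2 ^ 2 ≤ 2 ^ Module.finrank (ZMod 2) (LinearMap.range L) :=
        Nat.pow_le_pow_right (by norm_num) (by omega)
      omega
    · exact Set.toFinite _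
  simp only [Set.mem_insert_iff, Set.mem_singleton_iff, not_or] at hg01
  obtain ⟨hg0, hg1⟩ := hg01
  have hg : g ∈ LinearMap.range L := hg
  have hone : (1 : F) ∈ LinearMap.range L := by
    have := h3 g g hg hg
    rwa [mul_inv_cancel₀ hg0] at this
  have hI : ∀ s, s ∈ LinearMap.range L → s⁻¹ ∈ LinearMap.range L := by
    intro s hs
    simpa using h3 1 s hone hs
  have hKR : ∀ s, s ∈ LinearMap.ker f ↔ s ∈ LinearMap.range L := by
    intro s
    rw [hinv]
    exact ⟨fun hs => by simpa using hI _ hs, hI s⟩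
  have hdiv : ∀ k z, k ∈ LinearMap.range L → k ≠ 0 → k * z ∈ LinearMap.range L →
      z ∈ LinearMap.range L := by
    intro k z hk hk0 hkz
    have := h3 _ _ hkz hk
    rwa [mul_comm k z, mul_assoc, mul_inv_cancel₀ hk0, mul_one] at this
  apply hf
  ext z
  rw [LinearMap.zero_apply, ← LinearMap.mem_ker, hKR]
  by_contra hz
  have hgz : g * z ∉ LinearMap.range L := fun hh => hz (hdiv g z hg hg0 hh)
  have hsum : (g + 1) * z ∈ LinearMap.range L := by
    rw [← hKR, LinearMap.mem_ker] at hz hgz ⊢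
    rw [add_mul, one_mul, map_add]
    generalize f z = p at *
    generalize f (g * z) = q at *
    revert p q; decide
  refine hz (hdiv _ z (Submodule.add_mem _ hg hone) ?_ hsum)
  intro hh
  exact hg1 (by linear_combination hh - two)

theorem key_aux2 (m : ℕ) (hm : 4 ≤ m) (c b : GaloisField 2 m) (hb : b ≠ 0)
    (h : ∀ x, Tr m (c * (x⁻¹ + (x + b)⁻¹)) = 0) : c = 0 := by
  by_contra hc
  have two : (2 : GaloisField 2 m) = 0 := CharTwo.two_eq_zero
  have hcard : Nat.card (GaloisField 2 m) = 2 ^ m := GaloisField.card 2 m (by omega)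
  have : Finite (GaloisField 2 m) := Nat.finite_of_card_ne_zero (by rw [hcard]; positivity)
  have h16 : 2 ^ 4 ≤ 2 ^ m := Nat.pow_le_pow_right (by norm_num) hm
  refine key_aux (F := GaloisField 2 m) (by omega)
    ((Algebra.trace (ZMod 2) (GaloisField 2 m)).comp (LinearMap.mulLeft (ZMod 2) (c * b⁻¹))) ?_ ?_
  · intro h0
    have hnd := (traceForm_nondegenerate (ZMod 2) (GaloisField 2 m)).1 (c * b⁻¹) (by
      intro z
      have := LinearMap.congr_fun h0 z
      simpa [Algebra.traceForm_apply, mul_assoc] using this)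
    exact mul_ne_zero hc (inv_ne_zero hb) hnd
  · intro y
    by_cases hy : y ^ 2 + y = 0
    · simp [hy]
    have hy0 : y ≠ 0 := by rintro rfl; simp at hy
    have hy1 : y + 1 ≠ 0 := by
      intro h1; apply hy; linear_combination y * h1
    have := h (b * y)
    have e : c * b⁻¹ * (y ^ 2 + y)⁻¹ = c * ((b * y)⁻¹ + (b * y + b)⁻¹) := by
      have e1 : b * y + b = b * (y + 1) := by ring
      have e2 : y ^ 2 + y = y * (y + 1) := by ring
      rw [e1, e2]
      field_simp
      linear_combination (-y) * two
    simp only [LinearMap.comp_apply, LinearMap.mulLeft_apply, e]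
    exact this

/-- Lemma 3.8: for `m ≥ 4`, the inversion permutation `π(x) = x^{2^m - 2}` of `F_{2^m}`
satisfies Property (P). -/
theorem inversion_satisfies_propertyP
    (m : ℕ) (hm : 4 ≤ m)
    (π : GaloisField 2 m → GaloisField 2 m) (hπ : ∀ x, π x = x ^ (2 ^ m - 2)) :
    PropertyP m π := by
  have two : (2 : GaloisField 2 m) = 0 := CharTwo.two_eq_zero
  have hcard : Nat.card (GaloisField 2 m) = 2 ^ m := GaloisField.card 2 m (by omega)
  have : Finite (GaloisField 2 m) := Nat.finite_of_card_ne_zero (by rw [hcard]; positivity)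
  have h16 : 2 ^ 4 ≤ 2 ^ m := Nat.pow_le_pow_right (by norm_num) hm
  have hp : π = fun x => x⁻¹ := by
    funext x
    rw [hπ]
    by_cases hx : x = 0
    · rw [hx, inv_zero, zero_pow (by omega)]
    · apply eq_inv_of_mul_eq_one_left
      have := Fintype.ofFinite (GaloisField 2 m)
      have h1 := FiniteField.pow_card_sub_one_eq_one x hx
      rw [← Nat.card_eq_fintype_card, hcard] at h1
      rw [← pow_succ, ← h1]
      congr 1
      omega
  subst hp
  have hxx : ∀ x : GaloisField 2 m, x + x = 0 := fun x => CharTwo.add_self_eq_zero x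
  intro a₁ a₂ b₁ b₂
  constructor
  · rintro ⟨hi, hii⟩
    simp only at hi hii
    by_cases ha : a₂ = 0
    · by_cases hb : b₂ = 0
      · exact Or.inr (Or.inr (Or.inr ⟨ha, hb⟩))
      · refine Or.inl ⟨key_aux2 m hm a₁ b₂ hb ?_, ha⟩
        intro x
        rw [← hii x, ha, add_zero]
        congr 1
        linear_combination (-b₁ * (x + b₂)⁻¹) * two
    by_cases hb : b₂ = 0
    · refine Or.inr (Or.inl ⟨key_aux2 m hm b₁ a₂ ha ?_, hb⟩)
      intro x
      rw [← hii x, hb, add_zero, add_zero]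
      congr 1
      linear_combination (-a₁ * (x + a₂)⁻¹) * two
    by_cases hab : a₂ = b₂
    · refine Or.inr (Or.inr (Or.inl ⟨?_, hab⟩))
      have : a₁ + b₁ = 0 := by
        refine key_aux2 m hm (a₁ + b₁) a₂ ha ?_
        intro x
        rw [← hii x, ← hab, add_assoc x, hxx, add_zero]
        congr 1
        ring
      linear_combination this - b₁ * two
    exfalso
    obtain ⟨x, -, hx⟩ : ∃ x ∈ (Set.univ : Set (GaloisField 2 m)),
        x ∉ ({0, a₂, b₂, a₂ + b₂} : Set (GaloisField 2 m)) := by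
      apply Set.exists_mem_notMem_of_ncard_lt_ncard
      rw [Set.ncard_univ, hcard]
      have e1 := Set.ncard_insert_le (0 : GaloisField 2 m) {a₂, b₂, a₂ + b₂}
      have e2 := Set.ncard_insert_le a₂ {b₂, a₂ + b₂}
      have e3 := Set.ncard_insert_le b₂ {a₂ + b₂}
      have e4 := Set.ncard_singleton (a₂ + b₂)
      omega
      exact Set.toFinite _
    simp only [Set.mem_insert_iff, Set.mem_singleton_iff, not_or] at hx
    obtain ⟨x0, x1, x2, x3⟩ := hx
    have y1 : x + a₂ ≠ 0 := fun hh => x1 (by linear_combination hh - a₂ * two)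
    have y2 : x + b₂ ≠ 0 := fun hh => x2 (by linear_combination hh - b₂ * two)
    have y3 : x + a₂ + b₂ ≠ 0 := fun hh => x3 (by linear_combination hh - (a₂ + b₂) * two)
    have hh := hi x
    have y4 : a₂ + b₂ ≠ 0 := fun hh => hab (by linear_combination hh - b₂ * two)
    have : a₂ * b₂ * (a₂ + b₂) = 0 := by
      have e1 : x⁻¹ + (x + a₂)⁻¹ = a₂ / (x * (x + a₂)) := by
        field_simp
        linear_combination x * two
      have e2 : (x + b₂)⁻¹ + (x + a₂ + b₂)⁻¹ = a₂ / ((x + b₂) * (x + a₂ + b₂)) := by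
        field_simp
        linear_combination (x + b₂) * two
      rw [add_assoc, e1, e2, div_add_div _ _ (mul_ne_zero x0 y1) (mul_ne_zero y2 y3),
        div_eq_zero_iff] at hh
      rcases hh with hh | hh
      · linear_combination hh - (a₂ * x * (x + a₂) + a₂ * b₂ * x) * two
      · exact absurd hh (mul_ne_zero (mul_ne_zero x0 y1) (mul_ne_zero y2 y3))
    exact mul_ne_zero (mul_ne_zero ha hb) y4 this
  · have t0 : Tr m 0 = 0 := by simp [Tr]
    rintro (⟨rfl, rfl⟩ | ⟨rfl, rfl⟩ | ⟨rfl, rfl⟩ | ⟨rfl, rfl⟩)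
    · refine ⟨fun x => ?_, fun x => ?_⟩
      · simp only [add_zero]
        linear_combination (x⁻¹ + (x + b₂)⁻¹) * two
      · rw [← t0]; congr 1
        simp only [add_zero]
        linear_combination (b₁ * (x + b₂)⁻¹) * two
    · refine ⟨fun x => ?_, fun x => ?_⟩
      · simp only [add_zero]
        linear_combination (x⁻¹ + (x + a₂)⁻¹) * two
      · rw [← t0]; congr 1
        simp only [add_zero]
        linear_combination (a₁ * (x + a₂)⁻¹) * two
    · refine ⟨fun x => ?_, fun x => ?_⟩
      · simp only [add_assoc x, hxx, add_zero]
        linear_combination (x⁻¹ + (x + a₂)⁻¹) * two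
      · rw [← t0]; congr 1
        simp only [add_assoc x, hxx, add_zero]
        ring
    · refine ⟨fun x => ?_, fun x => ?_⟩
      · simp only [add_zero]
        linear_combination (2 * x⁻¹) * two
      · rw [← t0]; congr 1
        simp only [add_zero]
        linear_combination ((a₁ + b₁) * x⁻¹) * two
end
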